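/- arXiv:1404.1477 — 5 statements merged into one kernel-verified Lean document; each statement's English description precedes it below -/
import Mathlib

section
/- Let H and K be complex Hilbert spaces, V : H → K a linear isometry, and E a bounded operator on K which is an orthogonal projection (E self-adjoint with E² = E). If the compression V* E V is an orthogonal projection on H, then E commutes with the projection Q = V V* onto the range of V, i.e., E Q = Q E. -/
open ContinuousLinearMap

noncomputable section

/-- The C*-algebraic core: if `q e q` is idempotent for projections `e`, `q`, they commute. -/
theorem commute_core {A : Type*} [NormedRing A] [StarRing A] [CStarRing A] (e q : A)
    (he : star e = e) (hq : star q = q) (hee : e * e = e) (hqq : q * q = q)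
    (h : q * e * q * e * q = q * e * q) : e * q = q * e := by
  have h1 : e * q - q * e * q = 0 := by
    rw [← CStarRing.star_mul_self_eq_zero_iff]
    have h2 : star (e * q - q * e * q) * (e * q - q * e * q)
        = q * (e * e) * q - q * e * q * e * q - q * e * q * e * q
          + q * e * (q * q) * e * q := by
      simp only [star_sub, star_mul, he, hq]
      noncomm_ring
    rw [h2, hee, hqq, h]
    abel
  have h3 : e * q = q * e * q := sub_eq_zero.mp h1
  have h4 := congrArg star h3
  simp only [star_mul, he, hq] at h4
  exact h3.trans ((mul_assoc q e q).trans h4.symm)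

/-- If `E` is an orthogonal projection on `K` and its compression
`V* E V` to `H` (along a linear isometry `V : H → K`) is an orthogonal projection,
then `E` commutes with the projection `Q = V V*` onto the range of `V`. -/
theorem projection_compression_projection_commutes
    {H K : Type*} [NormedAddCommGroup H] [InnerProductSpace ℂ H] [CompleteSpace H]
    [NormedAddCommGroup K] [InnerProductSpace ℂ K] [CompleteSpace K]
    (V : H →ₗᵢ[ℂ] K) (E : K →L[ℂ] K)
    (hEsa : IsSelfAdjoint E) (hEidem : E ∘L E = E)
    (hCsa : IsSelfAdjoint
      (adjoint V.toContinuousLinearMap ∘L E ∘L V.toContinuousLinearMap))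
    (hCidem :
      (adjoint V.toContinuousLinearMap ∘L E ∘L V.toContinuousLinearMap) ∘L
          (adjoint V.toContinuousLinearMap ∘L E ∘L V.toContinuousLinearMap) =
        adjoint V.toContinuousLinearMap ∘L E ∘L V.toContinuousLinearMap) :
    E ∘L (V.toContinuousLinearMap ∘L adjoint V.toContinuousLinearMap) =
      (V.toContinuousLinearMap ∘L adjoint V.toContinuousLinearMap) ∘L E := by
  have hWW : ∀ x, adjoint V.toContinuousLinearMap (V x) = x := by
    intro x
    refine ext_inner_left ℂ fun y => ?_
    rw [adjoint_inner_right]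
    exact V.inner_map_map y x
  refine commute_core E (V.toContinuousLinearMap ∘L adjoint V.toContinuousLinearMap)
    hEsa ?_ hEidem ?_ ?_
  · rw [star_eq_adjoint, adjoint_comp, adjoint_adjoint]
  · ext x
    simp [hWW]
  · ext x
    have := congrArg V (congrArg (fun f => f (adjoint V.toContinuousLinearMap x)) hCidem)
    simpa using this
end
end

section
/- Let A₁ and A₂ be effects on a complex Hilbert space H. Then A₁ and A₂ are compatible if and only if there exist a complex Hilbert space K, a linear isometry V : H → K, and two orthogonal projections P₁, P₂ on K with P₁P₂ = P₂P₁, such that A₁ = V* P₁ V and A₂ = V* P₂ V. -/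
open ContinuousLinearMap

noncomputable section

/-- Two effects `A₁`, `A₂` are compatible if the two-outcome POVMs `{A₁, 1−A₁}` and
`{A₂, 1−A₂}` admit a joint POVM, i.e. there are four positive operators `G₀₀, G₀₁, G₁₀, G₁₁`
summing to `1` with `G₁₁ + G₁₀ = A₁` and `G₁₁ + G₀₁ = A₂`. -/
def EffectCompatible {H : Type*} [NormedAddCommGroup H] [InnerProductSpace ℂ H]
    [CompleteSpace H] (A₁ A₂ : H →L[ℂ] H) : Prop :=
  ∃ G₀₀ G₀₁ G₁₀ G₁₁ : H →L[ℂ] H,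
    G₀₀.IsPositive ∧ G₀₁.IsPositive ∧ G₁₀.IsPositive ∧ G₁₁.IsPositive ∧
    G₀₀ + G₀₁ + G₁₀ + G₁₁ = 1 ∧ G₁₁ + G₁₀ = A₁ ∧ G₁₁ + G₀₁ = A₂

universe u

/-- A self-adjoint idempotent operator is positive, and so is its compression. -/
lemma compression_isPositive {H K : Type*} [NormedAddCommGroup H] [InnerProductSpace ℂ H]
    [CompleteSpace H] [NormedAddCommGroup K] [InnerProductSpace ℂ K] [CompleteSpace K]
    (W : H →L[ℂ] K) (Q : K →L[ℂ] K) (hs : IsSelfAdjoint Q) (hi : Q * Q = Q) :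
    (adjoint W ∘L Q ∘L W).IsPositive := by
  have hp : Q.IsPositive := by
    have h := IsPositive.adjoint_conj (isPositive_one (E := K) (𝕜 := ℂ)) Q
    have e : adjoint Q ∘L (1 : K →L[ℂ] K) ∘L Q = Q := by
      rw [← star_eq_adjoint, hs.star_eq]
      exact hi
    rwa [e] at h
  exact IsPositive.adjoint_conj hp W

/-- Coordinate projection on the Hilbert sum of four copies of `H`. -/
def coordProj (H : Type*) [NormedAddCommGroup H] [InnerProductSpace ℂ H]
    (s : Fin 4 → Bool) : PiLp 2 (fun _ : Fin 4 => H) →L[ℂ] PiLp 2 (fun _ : Fin 4 => H) :=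
  (PiLp.continuousLinearEquiv 2 ℂ (fun _ : Fin 4 => H)).symm.toContinuousLinearMap ∘L
    (ContinuousLinearMap.pi fun i => (if s i then (1 : ℂ) else 0) •
      (ContinuousLinearMap.proj i : (Fin 4 → H) →L[ℂ] H)) ∘L
    (PiLp.continuousLinearEquiv 2 ℂ (fun _ : Fin 4 => H)).toContinuousLinearMap

lemma coordProj_apply {H : Type*} [NormedAddCommGroup H] [InnerProductSpace ℂ H]
    (s : Fin 4 → Bool) (x : PiLp 2 (fun _ : Fin 4 => H)) (i : Fin 4) :
    coordProj H s x i = if s i then x i else 0 := by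
  simp only [coordProj]
  by_cases h : s i = true <;> simp [h]

lemma coordProj_selfAdjoint {H : Type*} [NormedAddCommGroup H] [InnerProductSpace ℂ H]
    [CompleteSpace H] (s : Fin 4 → Bool) : IsSelfAdjoint (coordProj H s) := by
  rw [isSelfAdjoint_iff_isSymmetric]
  intro x y
  change inner ℂ (coordProj H s x) y = inner ℂ x (coordProj H s y)
  rw [PiLp.inner_apply, PiLp.inner_apply]
  refine Finset.sum_congr rfl fun i _ => ?_
  rw [coordProj_apply, coordProj_apply]
  split_ifs <;> simp

lemma coordProj_idem {H : Type*} [NormedAddCommGroup H] [InnerProductSpace ℂ H]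
    (s : Fin 4 → Bool) : coordProj H s ∘L coordProj H s = coordProj H s := by
  ext x i
  simp only [ContinuousLinearMap.comp_apply, coordProj_apply]
  split_ifs <;> rfl

lemma coordProj_comm {H : Type*} [NormedAddCommGroup H] [InnerProductSpace ℂ H]
    (s t : Fin 4 → Bool) :
    coordProj H s ∘L coordProj H t = coordProj H t ∘L coordProj H s := by
  ext x i
  simp only [ContinuousLinearMap.comp_apply, coordProj_apply]
  split_ifs <;> rfl

/-- The map `x ↦ (S i x)_i`. -/
def stackMap {H : Type*} [NormedAddCommGroup H] [InnerProductSpace ℂ H]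
    (S : Fin 4 → H →L[ℂ] H) : H →L[ℂ] PiLp 2 (fun _ : Fin 4 => H) :=
  (PiLp.continuousLinearEquiv 2 ℂ (fun _ : Fin 4 => H)).symm.toContinuousLinearMap ∘L
    (ContinuousLinearMap.pi S)

lemma stackMap_apply {H : Type*} [NormedAddCommGroup H] [InnerProductSpace ℂ H]
    (S : Fin 4 → H →L[ℂ] H) (x : H) (i : Fin 4) : stackMap S x i = S i x := by
  simp [stackMap]

lemma exists_sqrt {H : Type*} [NormedAddCommGroup H] [InnerProductSpace ℂ H]
    [CompleteSpace H] (G : H →L[ℂ] H) (hG : G.IsPositive) :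
    ∃ S : H →L[ℂ] H, ∀ x y, inner ℂ (S x) (S y) = inner ℂ x (G y) := by
  have h0 : 0 ≤ G := (nonneg_iff_isPositive G).2 hG
  refine ⟨CFC.sqrt G, fun x y => ?_⟩
  have hs : IsSelfAdjoint (CFC.sqrt G) := IsSelfAdjoint.of_nonneg (CFC.sqrt_nonneg G)
  have hsq : CFC.sqrt G * CFC.sqrt G = G := CFC.sqrt_mul_sqrt_self G h0
  have := (isSelfAdjoint_iff_isSymmetric.1 hs) x (CFC.sqrt G y)
  refine this.trans ?_
  change inner ℂ x ((CFC.sqrt G * CFC.sqrt G) y) = _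
  rw [hsq]

/-- Two effects are compatible iff they can be dilated to two commuting
orthogonal projections in a larger Hilbert space. -/
theorem effects_compatible_iff_commuting_projection_dilations
    {H : Type u} [NormedAddCommGroup H] [InnerProductSpace ℂ H] [CompleteSpace H]
    (A₁ A₂ : H →L[ℂ] H)
    (h₁pos : A₁.IsPositive) (h₁le : (1 - A₁).IsPositive)
    (h₂pos : A₂.IsPositive) (h₂le : (1 - A₂).IsPositive) :
    EffectCompatible A₁ A₂ ↔
      ∃ (K : Type u) (_ : NormedAddCommGroup K) (_ : InnerProductSpace ℂ K)
        (_ : CompleteSpace K) (V : H →ₗᵢ[ℂ] K) (P₁ P₂ : K →L[ℂ] K),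
        IsSelfAdjoint P₁ ∧ P₁ ∘L P₁ = P₁ ∧
        IsSelfAdjoint P₂ ∧ P₂ ∘L P₂ = P₂ ∧
        P₁ ∘L P₂ = P₂ ∘L P₁ ∧
        A₁ = adjoint V.toContinuousLinearMap ∘L P₁ ∘L V.toContinuousLinearMap ∧
        A₂ = adjoint V.toContinuousLinearMap ∘L P₂ ∘L V.toContinuousLinearMap := by
  constructor
  · rintro ⟨G₀₀, G₀₁, G₁₀, G₁₁, p₀₀, p₀₁, p₁₀, p₁₁, hsum, hA₁, hA₂⟩
    obtain ⟨S₀₀, s₀₀⟩ := exists_sqrt G₀₀ p₀₀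
    obtain ⟨S₀₁, s₀₁⟩ := exists_sqrt G₀₁ p₀₁
    obtain ⟨S₁₀, s₁₀⟩ := exists_sqrt G₁₀ p₁₀
    obtain ⟨S₁₁, s₁₁⟩ := exists_sqrt G₁₁ p₁₁
    have hV : ∀ x, ‖stackMap ![S₀₀, S₀₁, S₁₀, S₁₁] x‖ = ‖x‖ := by
      intro x
      have h : inner ℂ (stackMap ![S₀₀, S₀₁, S₁₀, S₁₁] x) (stackMap ![S₀₀, S₀₁, S₁₀, S₁₁] x)
          = inner ℂ x x := by
        rw [PiLp.inner_apply]
        simp only [stackMap_apply, Fin.sum_univ_four]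
        change inner ℂ (S₀₀ x) (S₀₀ x) + inner ℂ (S₀₁ x) (S₀₁ x) + inner ℂ (S₁₀ x) (S₁₀ x)
          + inner ℂ (S₁₁ x) (S₁₁ x) = _
        rw [s₀₀, s₀₁, s₁₀, s₁₁, ← inner_add_right, ← inner_add_right, ← inner_add_right]
        congr 1
        exact DFunLike.congr_fun hsum x
      rw [inner_self_eq_norm_sq_to_K, inner_self_eq_norm_sq_to_K] at h
      have h' : ‖stackMap ![S₀₀, S₀₁, S₁₀, S₁₁] x‖ ^ 2 = ‖x‖ ^ 2 := by exact_mod_cast h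
      exact (pow_left_inj₀ (norm_nonneg _) (norm_nonneg _) two_ne_zero).1 h'
    let V : H →ₗᵢ[ℂ] PiLp 2 (fun _ : Fin 4 => H) :=
      ⟨(stackMap ![S₀₀, S₀₁, S₁₀, S₁₁]).toLinearMap, hV⟩
    have hVc : V.toContinuousLinearMap = stackMap ![S₀₀, S₀₁, S₁₀, S₁₁] := by
      ext x; rfl
    refine ⟨PiLp 2 (fun _ : Fin 4 => H), inferInstance, inferInstance, inferInstance, V,
      coordProj H ![false, false, true, true], coordProj H ![false, true, false, true],
      coordProj_selfAdjoint _, coordProj_idem _, coordProj_selfAdjoint _, coordProj_idem _,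
      coordProj_comm _ _, ?_, ?_⟩
    · rw [hVc]
      ext y
      refine ext_inner_left ℂ fun x => ?_
      rw [comp_apply, adjoint_inner_right, comp_apply, PiLp.inner_apply]
      simp only [stackMap_apply, coordProj_apply, Fin.sum_univ_four]
      simp [s₁₀, s₁₁, ← hA₁, inner_add_right, add_comm]
    · rw [hVc]
      ext y
      refine ext_inner_left ℂ fun x => ?_
      rw [comp_apply, adjoint_inner_right, comp_apply, PiLp.inner_apply]
      simp only [stackMap_apply, coordProj_apply, Fin.sum_univ_four]
      simp [s₀₁, s₁₁, ← hA₂, inner_add_right, add_comm]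
  · rintro ⟨K, _, _, _, V, P₁, P₂, a₁, i₁, a₂, i₂, hc, e₁, e₂⟩
    have hVV : adjoint V.toContinuousLinearMap ∘L V.toContinuousLinearMap = 1 := by
      ext y
      refine ext_inner_left ℂ fun x => ?_
      rw [comp_apply, adjoint_inner_right]
      exact V.inner_map_map x y
    have hc' : P₁ * P₂ = P₂ * P₁ := hc
    have j₁ : P₁ * P₁ = P₁ := i₁
    have j₂ : P₂ * P₂ = P₂ := i₂
    have key : ∀ Q R : K →L[ℂ] K, IsSelfAdjoint Q → IsSelfAdjoint R → Q * R = R * Q →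
        Q * Q = Q → R * R = R →
        (adjoint V.toContinuousLinearMap ∘L (Q * R) ∘L V.toContinuousLinearMap).IsPositive := by
      intro Q R hQ hR hQR hQQ hRR
      refine compression_isPositive _ _ ?_ ?_
      · rw [IsSelfAdjoint, star_mul, hQ.star_eq, hR.star_eq, hQR]
      · calc Q * R * (Q * R) = Q * (R * Q) * R := by noncomm_ring
          _ = (Q * Q) * (R * R) := by rw [← hQR]; noncomm_ring
          _ = Q * R := by rw [hQQ, hRR]
    have b₁ : IsSelfAdjoint (1 - P₁) := (IsSelfAdjoint.one _).sub a₁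
    have b₂ : IsSelfAdjoint (1 - P₂) := (IsSelfAdjoint.one _).sub a₂
    have k₁ : (1 - P₁) * (1 - P₁) = 1 - P₁ := by
      rw [mul_sub, sub_mul, sub_mul, j₁]; simp
    have k₂ : (1 - P₂) * (1 - P₂) = 1 - P₂ := by
      rw [mul_sub, sub_mul, sub_mul, j₂]; simp
    have c : Commute P₁ P₂ := hc'
    have c₁ : Commute (1 - P₁) P₂ := (Commute.one_left _).sub_left c
    have c₂ : Commute P₁ (1 - P₂) := (Commute.one_right _).sub_right c
    have c₃ : Commute (1 - P₁) (1 - P₂) := (Commute.one_right _).sub_right c₁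
    refine ⟨_, _, _, _, key _ _ b₁ b₂ c₃ k₁ k₂, key _ _ b₁ a₂ c₁ k₁ j₂,
      key _ _ a₁ b₂ c₂ j₁ k₂, key _ _ a₁ a₂ c j₁ j₂, ?_, ?_, ?_⟩
    · rw [← hVV, ← comp_add, ← comp_add, ← comp_add, ← add_comp, ← add_comp, ← add_comp]
      have : (1 - P₁) * (1 - P₂) + (1 - P₁) * P₂ + P₁ * (1 - P₂) + P₁ * P₂ = 1 := by
        noncomm_ring
      rw [this]
      rfl
    · rw [e₁, ← comp_add, ← add_comp]
      have : P₁ * P₂ + P₁ * (1 - P₂) = P₁ := by noncomm_ring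
      rw [this]
    · rw [e₂, ← comp_add, ← add_comp]
      have : P₁ * P₂ + (1 - P₁) * P₂ = P₂ := by noncomm_ring
      rw [this]
end
end

section
/- Let A₁ and A₂ be effects on a complex Hilbert space H, and set B₁ = √(A₁(1−A₁)) and B₂ = √(A₂(1−A₂)), the positive square roots of the positive operators A₁(1−A₁) and A₂(1−A₂). If A₁A₂ + B₁B₂ = A₂A₁ + B₂B₁ and A₁B₂ + B₁(1−A₂) = A₂B₁ + B₂(1−A₁), then A₁ and A₂ are compatible. -/
open ContinuousLinearMap

noncomputable section

/-- Algebraic core: the compression of a product of two commuting projections. -/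
lemma compression_identity {R : Type*} [Ring R] (A₁ A₂ B₁ B₂ : R)
    (c₁ : A₁ * B₁ = B₁ * A₁) (c₂ : A₂ * B₂ = B₂ * A₂)
    (s₁ : B₁ * B₁ = A₁ * (1 - A₁)) (s₂ : B₂ * B₂ = A₂ * (1 - A₂))
    (h₁ : A₁ * A₂ + B₁ * B₂ = A₂ * A₁ + B₂ * B₁)
    (h₂ : A₁ * B₂ + B₁ * (1 - A₂) = A₂ * B₁ + B₂ * (1 - A₁)) :
    (A₂ * A₁ + B₂ * B₁) * (A₁ * A₂ + B₁ * B₂) +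
      (A₂ * B₁ + B₂ * (1 - A₁)) * (B₁ * A₂ + (1 - A₁) * B₂) = A₁ * A₂ + B₁ * B₂ := by
  have e₁ : A₁ * A₁ + B₁ * B₁ = A₁ := by rw [s₁]; noncomm_ring
  have e₂ : A₁ * B₁ + B₁ * (1 - A₁) = B₁ := by rw [c₁]; noncomm_ring
  have e₃ : B₁ * A₁ + (1 - A₁) * B₁ = B₁ := by rw [← c₁]; noncomm_ring
  have e₄ : B₁ * B₁ + (1 - A₁) * (1 - A₁) = 1 - A₁ := by rw [s₁]; noncomm_ring
  have f₁ : A₂ * A₂ + B₂ * B₂ = A₂ := by rw [s₂]; noncomm_ring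
  have f₂ : B₂ * A₂ + (1 - A₂) * B₂ = B₂ := by rw [← c₂]; noncomm_ring
  calc _ = A₂ * ((A₁ * A₁ + B₁ * B₁) * A₂ + (A₁ * B₁ + B₁ * (1 - A₁)) * B₂)
        + B₂ * ((B₁ * A₁ + (1 - A₁) * B₁) * A₂ +
          (B₁ * B₁ + (1 - A₁) * (1 - A₁)) * B₂) := by noncomm_ring
    _ = (A₂ * A₁ + B₂ * B₁) * A₂ + (A₂ * B₁ + B₂ * (1 - A₁)) * B₂ := by
        rw [e₁, e₂, e₃, e₄]; noncomm_ring
    _ = A₁ * (A₂ * A₂ + B₂ * B₂) + B₁ * (B₂ * A₂ + (1 - A₂) * B₂) := by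
        rw [← h₁, ← h₂]; noncomm_ring
    _ = _ := by rw [f₁, f₂]

lemma compression_isPositive_s11 {H : Type*} [NormedAddCommGroup H] [InnerProductSpace ℂ H]
    [CompleteSpace H] (A₁ A₂ B₁ B₂ : H →L[ℂ] H)
    (a₁ : IsSelfAdjoint A₁) (a₂ : IsSelfAdjoint A₂)
    (b₁ : IsSelfAdjoint B₁) (b₂ : IsSelfAdjoint B₂)
    (c₁ : A₁ * B₁ = B₁ * A₁) (c₂ : A₂ * B₂ = B₂ * A₂)
    (s₁ : B₁ * B₁ = A₁ * (1 - A₁)) (s₂ : B₂ * B₂ = A₂ * (1 - A₂))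
    (h₁ : A₁ * A₂ + B₁ * B₂ = A₂ * A₁ + B₂ * B₁)
    (h₂ : A₁ * B₂ + B₁ * (1 - A₂) = A₂ * B₁ + B₂ * (1 - A₁)) :
    (A₁ * A₂ + B₁ * B₂).IsPositive := by
  rw [← compression_identity A₁ A₂ B₁ B₂ c₁ c₂ s₁ s₂ h₁ h₂]
  have p := (isPositive_adjoint_comp_self (A₁ * A₂ + B₁ * B₂)).add
    (isPositive_adjoint_comp_self (B₁ * A₂ + (1 - A₁) * B₂))
  simp only [← star_eq_adjoint, star_add, star_mul, star_sub, star_one, a₁.star_eq, a₂.star_eq,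
    b₁.star_eq, b₂.star_eq] at p
  exact p

lemma commute_of_sq {H : Type*} [NormedAddCommGroup H] [InnerProductSpace ℂ H]
    [CompleteSpace H] (A B : H →L[ℂ] H) (hB : B.IsPositive)
    (s : B * B = A * (1 - A)) : A * B = B * A := by
  have h0 : 0 ≤ B := (nonneg_iff_isPositive B).2 hB
  have hc : Commute (B * B) A := by
    rw [s]
    change _ = _
    noncomm_ring
  have h : Commute (CFC.sqrt (B * B)) A := hc.cfcₙ_nnreal _
  rw [CFC.sqrt_mul_self B h0] at h
  exact h.eq.symm

/-- Let `B_i = √(A_i(1−A_i))` (the positive square root, characterized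
by `B_i` positive with `B_i² = A_i(1−A_i)`). If `A₁A₂ + B₁B₂ = A₂A₁ + B₂B₁` and
`A₁B₂ + B₁(1−A₂) = A₂B₁ + B₂(1−A₁)`, then the effects `A₁` and `A₂` are compatible. -/
theorem effects_compatible_of_commuting_canonical_dilations
    {H : Type*} [NormedAddCommGroup H] [InnerProductSpace ℂ H] [CompleteSpace H]
    (A₁ A₂ B₁ B₂ : H →L[ℂ] H)
    (h₁pos : A₁.IsPositive) (h₁le : (1 - A₁).IsPositive)
    (h₂pos : A₂.IsPositive) (h₂le : (1 - A₂).IsPositive)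
    (hB₁pos : B₁.IsPositive) (hB₁sq : B₁ ∘L B₁ = A₁ ∘L (1 - A₁))
    (hB₂pos : B₂.IsPositive) (hB₂sq : B₂ ∘L B₂ = A₂ ∘L (1 - A₂))
    (hcond₁ : A₁ ∘L A₂ + B₁ ∘L B₂ = A₂ ∘L A₁ + B₂ ∘L B₁)
    (hcond₂ : A₁ ∘L B₂ + B₁ ∘L (1 - A₂) = A₂ ∘L B₁ + B₂ ∘L (1 - A₁)) :
    EffectCompatible A₁ A₂ := by
  simp only [← mul_def] at *
  have c₁ := commute_of_sq A₁ B₁ hB₁pos hB₁sq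
  have c₂ := commute_of_sq A₂ B₂ hB₂pos hB₂sq
  have a₁ := h₁pos.isSelfAdjoint
  have a₂ := h₂pos.isSelfAdjoint
  have an₁ := h₁le.isSelfAdjoint
  have an₂ := h₂le.isSelfAdjoint
  have b₁ := hB₁pos.isSelfAdjoint
  have b₂ := hB₂pos.isSelfAdjoint
  have cn₁ : (1 - A₁) * (-B₁) = (-B₁) * (1 - A₁) := by
    linear_combination (norm := noncomm_ring) c₁
  have cn₂ : (1 - A₂) * (-B₂) = (-B₂) * (1 - A₂) := by
    linear_combination (norm := noncomm_ring) c₂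
  have sn₁ : (-B₁) * (-B₁) = (1 - A₁) * (1 - (1 - A₁)) := by
    linear_combination (norm := noncomm_ring) hB₁sq
  have sn₂ : (-B₂) * (-B₂) = (1 - A₂) * (1 - (1 - A₂)) := by
    linear_combination (norm := noncomm_ring) hB₂sq
  refine ⟨(1 - A₁) * (1 - A₂) + (-B₁) * (-B₂), (1 - A₁) * A₂ + (-B₁) * B₂,
    A₁ * (1 - A₂) + B₁ * (-B₂), A₁ * A₂ + B₁ * B₂,
    compression_isPositive_s11 _ _ _ _ an₁ an₂ b₁.neg b₂.neg cn₁ cn₂ sn₁ sn₂ ?_ ?_,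
    compression_isPositive_s11 _ _ _ _ an₁ a₂ b₁.neg b₂ cn₁ c₂ sn₁ hB₂sq ?_ ?_,
    compression_isPositive_s11 _ _ _ _ a₁ an₂ b₁ b₂.neg c₁ cn₂ hB₁sq sn₂ ?_ ?_,
    compression_isPositive_s11 _ _ _ _ a₁ a₂ b₁ b₂ c₁ c₂ hB₁sq hB₂sq hcond₁ hcond₂, ?_, ?_, ?_⟩
  · linear_combination (norm := noncomm_ring) hcond₁
  · linear_combination (norm := noncomm_ring) hcond₂
  · linear_combination (norm := noncomm_ring) -hcond₁
  · linear_combination (norm := noncomm_ring) -hcond₂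
  · linear_combination (norm := noncomm_ring) -hcond₁
  · linear_combination (norm := noncomm_ring) -hcond₂
  · noncomm_ring
  · noncomm_ring
  · noncomm_ring
end
end

section
/- Let g, ψ ∈ L²(ℝ, ℂ). Then ∫_{ℝ²} |∫_ℝ e^{−ip(x−q)} conj(g(x−q)) ψ(x) dx|² d(q,p) = 2π ‖g‖₂² ‖ψ‖₂², where the outer integral is with respect to Lebesgue measure on ℝ² (both sides possibly interpreted as extended reals). Equivalently, the map ψ ↦ ((q,p) ↦ (2π)^{−1/2} ⟨U_{q,p} g, ψ⟩) is an isometry of L²(ℝ) into L²(ℝ²) whenever ‖g‖₂ = 1. -/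
open MeasureTheory

noncomputable section

open scoped FourierTransform SchwartzMap ContDiff ENNReal

lemma lintegral_sq_eq_eLpNorm (f : ℝ → ℂ) :
    ∫⁻ x, ‖f x‖ₑ ^ 2 = eLpNorm f 2 volume ^ 2 := by
  have h := eLpNorm_nnreal_pow_eq_lintegral (μ := (volume : Measure ℝ)) (f := f) (p := 2) (by simp)
  have h2 : ((2 : NNReal) : ℝ) = ((2 : ℕ) : ℝ) := by norm_num
  rw [h2] at h
  simp only [ENNReal.rpow_natCast] at h
  exact h.symm

lemma fourier_toLp_ae (h : ℝ → ℂ) (h1 : Integrable h) (h2 : MemLp h 2) :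
    ∀ᵐ x, (𝓕 (h2.toLp h) : Lp ℂ 2 (volume : Measure ℝ)) x = 𝓕 h x := by
  have hcont : Continuous (𝓕 h) :=
    VectorFourier.fourierIntegral_continuous Real.continuous_fourierChar
      (by exact continuous_inner) h1
  apply ae_eq_of_integral_contDiff_smul_eq
  · exact (Lp.memLp _).locallyIntegrable (by norm_num)
  · exact hcont.locallyIntegrable
  · intro u u_smooth u_cpt
    have hg₁ : HasCompactSupport (Complex.ofRealCLM ∘ u) := u_cpt.comp_left rfl
    have hg₂ : ContDiff ℝ ∞ (Complex.ofRealCLM ∘ u) := by fun_prop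
    set φ : 𝓢(ℝ, ℂ) := hg₁.toSchwartzMap hg₂ with hφ
    have key := congrArg (fun T : 𝓢'(ℝ, ℂ) => T φ)
      (Lp.fourier_toTemperedDistribution_eq (h2.toLp h))
    simp only [TemperedDistribution.fourier_apply, Lp.toTemperedDistribution_apply] at key
    have hl : ∫ x, u x • (𝓕 (h2.toLp h) : Lp ℂ 2 (volume : Measure ℝ)) x =
        ∫ x, φ x • (𝓕 (h2.toLp h) : Lp ℂ 2 (volume : Measure ℝ)) x := by
      simp [hφ]
    have hr : ∫ x, u x • 𝓕 h x = ∫ x, φ x • 𝓕 h x := by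
      simp [hφ]
    rw [hl, hr, ← key]
    have sw := VectorFourier.integral_fourierIntegral_smul_eq_flip (μ := (volume : Measure ℝ))
      (ν := (volume : Measure ℝ)) (L := innerₗ ℝ) (f := φ) (g := h)
      Real.continuous_fourierChar (by exact continuous_inner) φ.integrable h1
    rw [flip_innerₗ] at sw
    have e1 : ∫ x, (𝓕 φ) x • (h2.toLp h) x = ∫ x, (𝓕 φ) x • h x := by
      apply integral_congr_ae
      filter_upwards [h2.coeFn_toLp] with x hx
      rw [hx]
    rw [e1]
    exact sw

lemma plancherel_aux (h : ℝ → ℂ) (h1 : Integrable h) (h2 : MemLp h 2) :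
    ∫⁻ w, ‖𝓕 h w‖ₑ ^ 2 = ∫⁻ x, ‖h x‖ₑ ^ 2 := by
  have e : ∫⁻ w, ‖𝓕 h w‖ₑ ^ 2 =
      ∫⁻ w, ‖(𝓕 (h2.toLp h) : Lp ℂ 2 (volume : Measure ℝ)) w‖ₑ ^ 2 := by
    apply lintegral_congr_ae
    filter_upwards [fourier_toLp_ae h h1 h2] with x hx
    rw [hx]
  rw [e, lintegral_sq_eq_eLpNorm, lintegral_sq_eq_eLpNorm, ← eLpNorm_congr_ae h2.coeFn_toLp,
    ← Lp.enorm_def, ← Lp.enorm_def, ← ofReal_norm, ← ofReal_norm, Lp.norm_fourier_eq]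

lemma lintegral_scale (F : ℝ → ℝ≥0∞) (hF : Measurable F) :
    ∫⁻ p, F p = ENNReal.ofReal (2 * Real.pi) * ∫⁻ w, F (2 * Real.pi * w) := by
  have hpos : (0:ℝ) < 2 * Real.pi := by positivity
  conv_lhs => rw [← Real.smul_map_volume_mul_left hpos.ne']
  rw [lintegral_smul_measure, lintegral_map hF (by fun_prop), abs_of_pos hpos, smul_eq_mul]

lemma inner_p_integral (h : ℝ → ℂ) (q : ℝ) (h1 : Integrable h) (h2 : MemLp h 2)
    (hm : Measurable fun p : ℝ =>
      ‖∫ x : ℝ, Complex.exp (-(Complex.I * (p : ℂ) * ((x : ℂ) - (q : ℂ)))) * h x‖ₑ ^ 2) :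
    ∫⁻ p : ℝ, ‖∫ x : ℝ, Complex.exp (-(Complex.I * (p : ℂ) * ((x : ℂ) - (q : ℂ)))) * h x‖ₑ ^ 2 =
      ENNReal.ofReal (2 * Real.pi) * ∫⁻ x, ‖h x‖ₑ ^ 2 := by
  rw [lintegral_scale _ hm, ← plancherel_aux h h1 h2]
  congr 1
  apply lintegral_congr
  intro w
  congr 1
  have : ∫ x : ℝ, Complex.exp (-(Complex.I * ((2 * Real.pi * w : ℝ) : ℂ) *
      ((x : ℂ) - (q : ℂ)))) * h x =
      Complex.exp (((2 * Real.pi * w * q : ℝ) : ℂ) * Complex.I) * 𝓕 h w := by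
    rw [Real.fourier_real_eq_integral_exp_smul, ← integral_const_mul]
    congr 1
    ext x
    rw [smul_eq_mul, ← mul_assoc, ← Complex.exp_add]
    congr 2
    push_cast
    ring
  rw [this, enorm_mul]
  have : ‖Complex.exp (((2 * Real.pi * w * q : ℝ) : ℂ) * Complex.I)‖ₑ = 1 := by
    rw [← ofReal_norm, Complex.norm_exp_ofReal_mul_I, ENNReal.ofReal_one]
  rw [this, one_mul]

/-- For `g, ψ ∈ L²(ℝ)`,
`∫_{ℝ²} |⟨U_{q,p} g, ψ⟩|² d(q,p) = 2π ‖g‖₂² ‖ψ‖₂²`, where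
`⟨U_{q,p} g, ψ⟩ = ∫ e^{−ip(x−q)} conj(g(x−q)) ψ(x) dx`. In particular,
`ψ ↦ (2π)^{−1/2} ⟨U_{q,p} g, ψ⟩` is an isometry of `L²(ℝ)` into `L²(ℝ²)` when `‖g‖₂ = 1`. -/
theorem weyl_transform_isometry (g ψ : Lp ℂ 2 (volume : Measure ℝ)) :
    ∫⁻ z : ℝ × ℝ, ENNReal.ofReal
        (‖∫ x : ℝ, Complex.exp (-(Complex.I * (z.2 : ℂ) * ((x : ℂ) - (z.1 : ℂ)))) *
            (starRingEnd ℂ) (g (x - z.1)) * ψ x‖ ^ 2) =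
      ENNReal.ofReal (2 * Real.pi * ‖g‖ ^ 2 * ‖ψ‖ ^ 2) := by
  have hgm : Measurable g := (Lp.stronglyMeasurable g).measurable
  have hψm : Measurable ψ := (Lp.stronglyMeasurable ψ).measurable
  have hconv : ∀ c : ℂ, ENNReal.ofReal (‖c‖ ^ 2) = ‖c‖ₑ ^ 2 := fun c => by
    rw [ENNReal.ofReal_pow (norm_nonneg _), ofReal_norm]
  simp only [hconv, mul_assoc (Complex.exp _)]
  have hstar : Measurable (starRingEnd ℂ) := Complex.continuous_conj.measurable
  have hmeas : Measurable fun z : ℝ × ℝ =>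
      ‖∫ x : ℝ, Complex.exp (-(Complex.I * (z.2 : ℂ) * ((x : ℂ) - (z.1 : ℂ)))) *
            ((starRingEnd ℂ) (g (x - z.1)) * ψ x)‖ₑ ^ 2 := by
    have : Measurable fun y : (ℝ × ℝ) × ℝ =>
        Complex.exp (-(Complex.I * (y.1.2 : ℂ) * ((y.2 : ℂ) - (y.1.1 : ℂ)))) *
            ((starRingEnd ℂ) (g (y.2 - y.1.1)) * ψ y.2) := by
      have a1 : Measurable fun y : (ℝ × ℝ) × ℝ => (starRingEnd ℂ) (g (y.2 - y.1.1)) :=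
        hstar.comp (hgm.comp (by fun_prop))
      have a2 : Measurable fun y : (ℝ × ℝ) × ℝ => ψ y.2 := hψm.comp (by fun_prop)
      have a3 : Measurable fun y : (ℝ × ℝ) × ℝ =>
        Complex.exp (-(Complex.I * (y.1.2 : ℂ) * ((y.2 : ℂ) - (y.1.1 : ℂ)))) := by
        apply Continuous.measurable
        fun_prop
      exact a3.mul (a1.mul a2)
    exact (this.stronglyMeasurable.integral_prod_right').measurable.enorm.pow_const 2
  have hmq : ∀ q : ℝ, Measurable fun p : ℝ =>
      ‖∫ x : ℝ, Complex.exp (-(Complex.I * (p : ℂ) * ((x : ℂ) - (q : ℂ)))) *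
            ((starRingEnd ℂ) (g (x - q)) * ψ x)‖ₑ ^ 2 := by
    intro q
    have h := hmeas.comp (measurable_prodMk_left (x := q))
    simp only [Function.comp_def] at h
    exact h
  rw [Measure.volume_eq_prod, lintegral_prod _ hmeas.aemeasurable]
  have hGm : Measurable fun y : ℝ × ℝ => ‖(starRingEnd ℂ) (g (y.2 - y.1)) * ψ y.2‖ₑ ^ 2 := by
    have a1 : Measurable fun y : ℝ × ℝ => (starRingEnd ℂ) (g (y.2 - y.1)) :=
      hstar.comp (hgm.comp (by fun_prop))
    have a2 : Measurable fun y : ℝ × ℝ => ψ y.2 := hψm.comp (by fun_prop)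
    exact (a1.mul a2).enorm.pow_const 2
  have hswap : ∫⁻ q : ℝ, ∫⁻ x : ℝ, ‖(starRingEnd ℂ) (g (x - q)) * ψ x‖ₑ ^ 2 =
      ‖g‖ₑ ^ 2 * ‖ψ‖ₑ ^ 2 := by
    rw [lintegral_lintegral_swap hGm.aemeasurable]
    simp only [enorm_mul, mul_pow, RCLike.enorm_conj]
    have : ∀ x : ℝ, ∫⁻ q : ℝ, ‖g (x - q)‖ₑ ^ 2 * ‖ψ x‖ₑ ^ 2 = ‖g‖ₑ ^ 2 * ‖ψ x‖ₑ ^ 2 := by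
      intro x
      have hgx : Measurable fun q : ℝ => g (x - q) := hgm.comp (measurable_const.sub measurable_id)
      rw [lintegral_mul_const _ (hgx.enorm.pow_const 2),
        lintegral_sub_left_eq_self (fun y => ‖g y‖ₑ ^ 2) x, lintegral_sq_eq_eLpNorm, Lp.enorm_def]
    simp only [this]
    rw [lintegral_const_mul _ (hψm.enorm.pow_const 2), lintegral_sq_eq_eLpNorm, ← Lp.enorm_def]
  have hfin : ∀ᵐ q : ℝ, ∫⁻ x : ℝ, ‖(starRingEnd ℂ) (g (x - q)) * ψ x‖ₑ ^ 2 < (⊤ : ℝ≥0∞) := by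
    apply ae_lt_top hGm.lintegral_prod_right'
    rw [hswap]
    exact ENNReal.mul_ne_top (by simp) (by simp)
  have hmain : ∀ᵐ q : ℝ, ∫⁻ p : ℝ,
      ‖∫ x : ℝ, Complex.exp (-(Complex.I * (p : ℂ) * ((x : ℂ) - (q : ℂ)))) *
            ((starRingEnd ℂ) (g (x - q)) * ψ x)‖ₑ ^ 2 =
      ENNReal.ofReal (2 * Real.pi) * ∫⁻ x : ℝ, ‖(starRingEnd ℂ) (g (x - q)) * ψ x‖ₑ ^ 2 := by
    filter_upwards [hfin] with q hq
    have hm1 : Measurable fun x : ℝ => (starRingEnd ℂ) (g (x - q)) * ψ x :=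
      (hstar.comp (hgm.comp (by fun_prop))).mul hψm
    have hg2 : MemLp (fun x : ℝ => (starRingEnd ℂ) (g (x - q))) 2 volume :=
      ((Lp.memLp g).comp_measurePreserving (measurePreserving_sub_right volume q)).star
    refine inner_p_integral _ q ?_ ?_ ?_
    · exact hg2.integrable_mul (Lp.memLp ψ)
    · refine ⟨hm1.aestronglyMeasurable, ?_⟩
      rw [lintegral_sq_eq_eLpNorm] at hq
      by_contra hc
      rw [not_lt_top_iff] at hc
      simp [hc] at hq
    · exact hmq q
  rw [lintegral_congr_ae hmain, lintegral_const_mul _ hGm.lintegral_prod_right', hswap,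
    ← ofReal_norm g, ← ofReal_norm ψ, ← ENNReal.ofReal_pow (norm_nonneg _),
    ← ENNReal.ofReal_pow (norm_nonneg _), ← ENNReal.ofReal_mul (by positivity),
    ← ENNReal.ofReal_mul (by positivity)]
  congr 1
  ring
end
end

section
/- Let g, ψ ∈ L²(ℝ, ℂ) and let Δ ⊆ ℝ be a Borel set. Then (1/(2π)) ∫_{Δ×ℝ} |∫_ℝ e^{−ip(x−q)} conj(g(x−q)) ψ(x) dx|² d(q,p) = ∫_ℝ (1_Δ ∗ |g|²)(x) |ψ(x)|² dx, where (1_Δ ∗ |g|²)(x) = ∫_Δ |g(x−y)|² dy. In other words, the position marginal of the phase-space observable generated by g is the smearing of the position observable by the convolution kernel 1_Δ ∗ |g|². -/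
open MeasureTheory

noncomputable section

section Helpers

open FourierTransform SchwartzMap
open scoped ENNReal ContDiff

theorem fourier_ae (h : ℝ → ℂ) (h1 : Integrable h) (h2 : MemLp h 2) :
    ((𝓕 (h2.toLp h) : Lp ℂ 2 (volume : Measure ℝ)) : ℝ → ℂ) =ᵐ[volume] 𝓕 h := by
  have hcont : Continuous (𝓕 h) := by
    exact VectorFourier.fourierIntegral_continuous Real.continuous_fourierChar
      (by fun_prop) h1
  apply ae_eq_of_integral_contDiff_smul_eq ((Lp.memLp _).locallyIntegrable (by norm_num))
    hcont.locallyIntegrable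
  intro g g_smooth g_cpt
  have hg₁ : HasCompactSupport (Complex.ofRealCLM ∘ g) := g_cpt.comp_left rfl
  have hg₂ : ContDiff ℝ ∞ (Complex.ofRealCLM ∘ g) := Complex.ofRealCLM.contDiff.comp g_smooth
  set φ : 𝓢(ℝ, ℂ) := hg₁.toSchwartzMap hg₂
  have key := congrArg (fun T => T φ) (Lp.fourier_toTemperedDistribution_eq (h2.toLp h))
  simp only [TemperedDistribution.fourier_apply, Lp.toTemperedDistribution_apply] at key
  calc ∫ x, g x • (𝓕 (h2.toLp h) : Lp ℂ 2 (volume : Measure ℝ)) x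
      = ∫ x, φ x • (𝓕 (h2.toLp h) : Lp ℂ 2 (volume : Measure ℝ)) x := by
        simp [φ]
    _ = ∫ x, (𝓕 φ) x • (h2.toLp h) x := key.symm
    _ = ∫ x, (𝓕 φ) x • h x := by
        apply integral_congr_ae
        filter_upwards [h2.coeFn_toLp] with x hx
        rw [hx]
    _ = ∫ x, φ x • 𝓕 h x := by
        have := (VectorFourier.integral_fourierIntegral_smul_eq_flip (L := innerₗ ℝ)
          (μ := volume) (ν := volume) Real.continuous_fourierChar (by fun_prop)
          (φ.integrable) h1)
        rw [SchwartzMap.fourier_coe]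
        simpa using! this
    _ = _ := by simp [φ]

theorem plancherel (h : ℝ → ℂ) (h1 : Integrable h) (h2 : MemLp h 2) :
    ∫⁻ p, ‖𝓕 h p‖ₑ ^ 2 = ∫⁻ x, ‖h x‖ₑ ^ 2 := by
  have e := Lp.norm_fourier_eq (h2.toLp h)
  have e2 : eLpNorm (𝓕 h) 2 volume = eLpNorm h 2 volume := by
    rw [← eLpNorm_congr_ae (fourier_ae h h1 h2), ← eLpNorm_congr_ae h2.coeFn_toLp]
    rwa [Lp.norm_def, Lp.norm_def, ENNReal.toReal_eq_toReal_iff' (Lp.eLpNorm_ne_top _) (Lp.eLpNorm_ne_top _)] at e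
  have k : ∀ f : ℝ → ℂ, ∫⁻ x, ‖f x‖ₑ ^ 2 = eLpNorm f 2 volume ^ 2 := by
    intro f
    rw [eLpNorm_eq_lintegral_rpow_enorm_toReal (by norm_num) (by norm_num),
      ← ENNReal.rpow_natCast, ← ENNReal.rpow_mul]
    norm_num
  rw [k, k, e2]

theorem plancherel2 (h : ℝ → ℂ) (h1 : Integrable h) (h2 : MemLp h 2) (q : ℝ) :
    ∫⁻ p : ℝ, ‖∫ x : ℝ, Complex.exp (-(Complex.I * (p : ℂ) * ((x : ℂ) - (q : ℂ)))) * h x‖ₑ ^ 2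
     = ENNReal.ofReal (2 * Real.pi) * ∫⁻ x, ‖h x‖ₑ ^ 2 := by
  have hpi : (0:ℝ) < 2 * Real.pi := by positivity
  rw [← plancherel h h1 h2]
  have A : ∀ p : ℝ, ‖∫ x : ℝ, Complex.exp (-(Complex.I * (p : ℂ) * ((x : ℂ) - (q : ℂ)))) * h x‖ₑ ^ 2
      = ‖𝓕 h ((2 * Real.pi)⁻¹ * p)‖ₑ ^ 2 := by
    intro p
    congr 1
    have : ∀ x : ℝ, Complex.exp (-(Complex.I * (p : ℂ) * ((x : ℂ) - (q : ℂ)))) * h x =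
       Complex.exp (((p * q : ℝ) : ℂ) * Complex.I) *
        (Complex.exp ((↑(-2 * Real.pi * x * ((2 * Real.pi)⁻¹ * p)) : ℂ) * Complex.I) • h x) := by
      intro x
      rw [smul_eq_mul, ← mul_assoc, ← Complex.exp_add]
      congr 2
      have : (-2 * Real.pi * x * ((2 * Real.pi)⁻¹ * p)) = - (x * p) := by field_simp
      rw [this]; push_cast; ring
    simp_rw [this]
    rw [integral_const_mul, enorm_mul, Real.fourier_real_eq_integral_exp_smul]
    rw [← ofReal_norm (Complex.exp _), Complex.norm_exp_ofReal_mul_I]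
    simp
  simp_rw [A]
  have hcont : Continuous (𝓕 h) :=
    VectorFourier.fourierIntegral_continuous Real.continuous_fourierChar (by fun_prop) h1
  have B := lintegral_map (μ := (volume : Measure ℝ)) (f := fun p => ‖𝓕 h p‖ₑ ^ 2)
    (g := fun p => (2 * Real.pi)⁻¹ * p)
    (by have := hcont.measurable; fun_prop) (by fun_prop)
  rw [← B, Real.map_volume_mul_left (by positivity), lintegral_smul_measure, inv_inv,
    abs_of_pos hpi, smul_eq_mul]

end Helpers

/-- For `g, ψ ∈ L²(ℝ)` and a Borel set `Δ ⊆ ℝ`,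
`(1/2π) ∫_{Δ×ℝ} |⟨U_{q,p} g, ψ⟩|² d(q,p) = ∫ (1_Δ ∗ |g|²)(x) |ψ(x)|² dx`:
the position marginal of the phase-space observable generated by `g` is the smearing of
the position observable by the convolution kernel `1_Δ ∗ |g|²`. -/
theorem position_marginal_of_phase_space_observable
    (g ψ : Lp ℂ 2 (volume : Measure ℝ)) (Δ : Set ℝ) (hΔ : MeasurableSet Δ) :
    ∫⁻ z in Δ ×ˢ (Set.univ : Set ℝ), ENNReal.ofReal
        (‖∫ x : ℝ, Complex.exp (-(Complex.I * (z.2 : ℂ) * ((x : ℂ) - (z.1 : ℂ)))) *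
            (starRingEnd ℂ) (g (x - z.1)) * ψ x‖ ^ 2) =
      ENNReal.ofReal (2 * Real.pi) *
        ∫⁻ x : ℝ, (∫⁻ y in Δ, ENNReal.ofReal (‖g (x - y)‖ ^ 2)) *
          ENNReal.ofReal (‖ψ x‖ ^ 2) := by
  have hg : Measurable (g : ℝ → ℂ) := (Lp.stronglyMeasurable g).measurable
  have hψ : Measurable (ψ : ℝ → ℂ) := (Lp.stronglyMeasurable ψ).measurable
  have hconj : Measurable (starRingEnd ℂ) := Complex.continuous_conj.measurable
  have hof : ∀ w : ℂ, ENNReal.ofReal (‖w‖ ^ 2) = ‖w‖ₑ ^ 2 := by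
    intro w
    rw [ENNReal.ofReal_pow (norm_nonneg _), ofReal_norm]
  simp_rw [hof]
  have fin : ∀ f : Lp ℂ 2 (volume : Measure ℝ), ∫⁻ x, ‖f x‖ₑ ^ 2 ≠ ⊤ := by
    intro f
    have := (Lp.memLp f).eLpNorm_lt_top
    rw [eLpNorm_lt_top_iff_lintegral_rpow_enorm_lt_top (by norm_num) (by norm_num)] at this
    simpa using this.ne
  -- measurability
  have m0 : Measurable (fun w : ℝ × ℝ => ‖g (w.2 - w.1)‖ₑ ^ 2 * ‖ψ w.2‖ₑ ^ 2) := by fun_prop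
  have m1 : StronglyMeasurable (fun z : ℝ × ℝ =>
      ∫ x : ℝ, Complex.exp (-(Complex.I * (z.2 : ℂ) * ((x : ℂ) - (z.1 : ℂ)))) *
            (starRingEnd ℂ) (g (x - z.1)) * ψ x) := by
    have : Measurable (fun w : (ℝ × ℝ) × ℝ =>
        Complex.exp (-(Complex.I * (w.1.2 : ℂ) * ((w.2 : ℂ) - (w.1.1 : ℂ)))) *
            (starRingEnd ℂ) (g (w.2 - w.1.1)) * ψ w.2) := by
      fun_prop
    exact this.stronglyMeasurable.integral_prod_right
  -- finiteness for almost every q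
  have hae : ∀ᵐ q : ℝ, ∫⁻ x, ‖g (x - q)‖ₑ ^ 2 * ‖ψ x‖ₑ ^ 2 < ⊤ := by
    apply ae_lt_top m0.lintegral_prod_right'
    rw [lintegral_lintegral_swap m0.aemeasurable]
    have : ∀ x : ℝ, ∫⁻ q, ‖g (x - q)‖ₑ ^ 2 * ‖ψ x‖ₑ ^ 2
        = (∫⁻ q, ‖g q‖ₑ ^ 2) * ‖ψ x‖ₑ ^ 2 := by
      intro x
      rw [lintegral_mul_const _ (by fun_prop),
        lintegral_sub_left_eq_self (fun t => ‖g t‖ₑ ^ 2) x]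
    simp_rw [this]
    rw [lintegral_const_mul _ (by fun_prop)]
    exact ENNReal.mul_ne_top (fin g) (fin ψ)
  rw [Measure.volume_eq_prod, ← Measure.prod_restrict, Measure.restrict_univ,
    lintegral_prod _ (m1.measurable.enorm.pow_const 2).aemeasurable]
  have step : ∀ᵐ q : ℝ ∂(volume.restrict Δ), ∫⁻ p : ℝ, ‖∫ x : ℝ,
      Complex.exp (-(Complex.I * (p : ℂ) * ((x : ℂ) - (q : ℂ)))) *
            (starRingEnd ℂ) (g (x - q)) * ψ x‖ₑ ^ 2
      = ENNReal.ofReal (2 * Real.pi) * ∫⁻ x, ‖g (x - q)‖ₑ ^ 2 * ‖ψ x‖ₑ ^ 2 := by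
    apply ae_restrict_of_ae
    filter_upwards [hae] with q hq
    have hm : Measurable (fun x => (starRingEnd ℂ) (g (x - q)) * ψ x) := by fun_prop
    have e : ∀ x, ‖(starRingEnd ℂ) (g (x - q)) * ψ x‖ₑ ^ 2
        = ‖g (x - q)‖ₑ ^ 2 * ‖ψ x‖ₑ ^ 2 := by
      intro x
      rw [enorm_mul, mul_pow, ← ofReal_norm ((starRingEnd ℂ) _), RCLike.norm_conj, ofReal_norm]
    have h2 : MemLp (fun x => (starRingEnd ℂ) (g (x - q)) * ψ x) 2 := by
      refine ⟨hm.aestronglyMeasurable, ?_⟩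
      rw [eLpNorm_lt_top_iff_lintegral_rpow_enorm_lt_top (by norm_num) (by norm_num)]
      simpa [← e] using hq
    have h1 : Integrable (fun x => (starRingEnd ℂ) (g (x - q)) * ψ x) := by
      have a : MemLp (fun x => g (x - q)) 2 :=
        (Lp.memLp g).comp_measurePreserving (measurePreserving_sub_right volume q)
      have b : MemLp (fun x => (starRingEnd ℂ) (g (x - q))) 2 := a.star
      exact b.integrable_mul (Lp.memLp ψ)
    have := plancherel2 _ h1 h2 q
    simp_rw [e, ← mul_assoc] at this
    exact this
  rw [lintegral_congr_ae step, lintegral_const_mul _ m0.lintegral_prod_right',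
    lintegral_lintegral_swap m0.aemeasurable]
  congr 1
  apply lintegral_congr
  intro x
  dsimp only
  rw [lintegral_mul_const _ (by fun_prop)]
end
end
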